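/- arXiv:math/0603436 — 2 statements merged into one kernel-verified Lean document; each statement's English description precedes it below -/
import Mathlib

section
/- Let K be a number field and v a finite place of K whose residue characteristic is not 2, with valuation ring o_v, maximal ideal m_v, and residue field k_v. Let F ∈ o_v[x] be a monic cubic polynomial whose reduction modulo m_v has no repeated roots in the algebraic closure of k_v. Then the reductions modulo m_v of the polynomials 4F(x) and (F'(x))² − 8xF(x) have no common root in the algebraic closure of k_v, and the leading coefficient of (F'(x))² − 8xF(x) is a v-adic unit; consequently the Lattès map φ(x) = ((F'(x))² − 8xF(x))/(4F(x)) has simple good reduction at v. -/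
/-!
Statement 1.  Let `K` be a number field, `v` a finite place with valuation ring
`o_v` (the localization of `o_K` at `v`) and residue characteristic `≠ 2`.  Let
`F ∈ o_v[x]` be a monic cubic whose reduction mod `m_v` has no repeated roots in the
algebraic closure of the residue field.  Then the reductions of `4F(x)` and
`(F'(x))² − 8xF(x)` have no common root in the algebraic closure of the residue
field, the leading coefficient of `(F'(x))² − 8xF(x)` is a `v`-adic unit, and hence
the Lattès map `φ(x) = ((F')² − 8xF)/(4F)` has simple good reduction at `v` (the
degree-4 homogenizations of the numerator and denominator have no common projective
root over the algebraic closure of the residue field).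

The algebraic closure of the residue field is encoded as an algebraically closed
field `Ω` equipped with a ring homomorphism `ψ : o_v → Ω` whose kernel is the
maximal ideal `m_v`.
-/

noncomputable section

open IsDedekindDomain NumberField Polynomial

/-- Evaluation at `(s, t) ∈ Ω²` of the image under `ψ` of the degree-`d`
homogenization `∑ i, coeff i · x^i · y^(d-i)` of a polynomial `p`. -/
def homEval {R Ω : Type*} [CommRing R] [CommRing Ω] (ψ : R →+* Ω)
    (d : ℕ) (p : Polynomial R) (s t : Ω) : Ω :=
  ∑ i ∈ Finset.range (d + 1), ψ (p.coeff i) * s ^ i * t ^ (d - i)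

/-!
At a common root `α` of the reductions of `4F` and `(F')² − 8xF` we have `F(α) = 0`, because `2` is
invertible, and then `F'(α)² = 0`; so `α` is a repeated root of the reduction of `F`. The point at
infinity is no common root, because the `x⁴`-coefficient of the numerator is `3² − 8 = 1`.
-/

section ProjectiveRoots

theorem homEval_zero_right {R S : Type*} [CommRing R] [CommRing S] (ψ : R →+* S) (d : ℕ)
    (p : R[X]) (s : S) : homEval ψ d p s 0 = ψ (p.coeff d) * s ^ d := by
  rw [homEval, Finset.sum_range_succ, Finset.sum_eq_zero, zero_add, Nat.sub_self, pow_zero, mul_one]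
  intro i hi
  rw [zero_pow (Nat.sub_ne_zero_of_lt (Finset.mem_range.mp hi)), mul_zero]

theorem homEval_mul_left {R S : Type*} [CommRing R] [CommRing S] (ψ : R →+* S) {d : ℕ}
    {p : R[X]} (hp : p.natDegree ≤ d) (α t : S) :
    homEval ψ d p (α * t) t = t ^ d * (p.map ψ).eval α := by
  rw [homEval, eval_map, eval₂_eq_sum_range' ψ (Nat.lt_succ_of_le hp), Finset.mul_sum]
  refine Finset.sum_congr rfl fun i hi => ?_
  have hpow : t ^ i * t ^ (d - i) = t ^ d := pow_mul_pow_sub t (Finset.mem_range_succ_iff.mp hi)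
  rw [mul_pow, ← hpow]
  ring

/-- The reductions along `ψ` of the degree-`d` homogenizations of `p` and `q` have no common zero
in `ℙ¹(k)`. If `ψ` is the reduction map from a valuation ring to the algebraic closure `k` of its
residue field, this is simple good reduction of the map `[p : q]` of degree `d`. -/
def NoCommonProjectiveRoot {R k : Type*} [CommRing R] [Field k] (ψ : R →+* k) (d : ℕ)
    (p q : R[X]) : Prop :=
  ∀ s t : k, ¬(s = 0 ∧ t = 0) → ¬(homEval ψ d p s t = 0 ∧ homEval ψ d q s t = 0)

theorem noCommonProjectiveRoot_iff {R k : Type*} [CommRing R] [Field k] (ψ : R →+* k) {d : ℕ}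
    {p q : R[X]} (hp : p.natDegree ≤ d) (hq : q.natDegree ≤ d) :
    NoCommonProjectiveRoot ψ d p q ↔
      (∀ α : k, ¬((p.map ψ).eval α = 0 ∧ (q.map ψ).eval α = 0)) ∧
        ¬(ψ (p.coeff d) = 0 ∧ ψ (q.coeff d) = 0) := by
  constructor
  · intro h
    constructor
    · intro α
      have h_one : ¬(homEval ψ d p (α * 1) 1 = 0 ∧ homEval ψ d q (α * 1) 1 = 0) :=
        h (α * 1) 1 fun h0 => one_ne_zero h0.2
      rwa [homEval_mul_left ψ hp, homEval_mul_left ψ hq, one_pow, one_mul, one_mul] at h_one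
    · simpa [homEval_zero_right] using h 1 0
  · rintro ⟨h_affine, h_infinity⟩ s t hst
    by_cases ht : t = 0
    · subst ht
      have hs : s ^ d ≠ 0 := pow_ne_zero d fun hs => hst ⟨hs, rfl⟩
      simpa [homEval_zero_right, hs] using h_infinity
    · rw [← div_mul_cancel₀ s ht, homEval_mul_left ψ hp, homEval_mul_left ψ hq,
        mul_eq_zero_iff_left (pow_ne_zero d ht), mul_eq_zero_iff_left (pow_ne_zero d ht)]
      exact h_affine (s / t)

end ProjectiveRoots

section Lattes

variable {R : Type*} [CommRing R]

/-- The numerator of the `x`-coordinate of the duplication map on `y² = F(x)`. -/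
def lattesNum (F : R[X]) : R[X] :=
  derivative F ^ 2 - C 8 * (X * F)

/-- The denominator of the `x`-coordinate of the duplication map on `y² = F(x)`. -/
def lattesDenom (F : R[X]) : R[X] :=
  C 4 * F

theorem lattesNum_map {S : Type*} [CommRing S] (ψ : R →+* S) (F : R[X]) :
    (lattesNum F).map ψ = lattesNum (F.map ψ) := by
  simp [lattesNum, derivative_map, map_ofNat ψ]

theorem lattesDenom_map {S : Type*} [CommRing S] (ψ : R →+* S) (F : R[X]) :
    (lattesDenom F).map ψ = lattesDenom (F.map ψ) := by
  simp [lattesDenom, map_ofNat ψ]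

theorem eval_lattesNum_of_isRoot {F : R[X]} {α : R} (hα : F.IsRoot α) :
    (lattesNum F).eval α = (derivative F).eval α ^ 2 := by
  simp [lattesNum, hα.eq_zero]

theorem isRoot_lattesDenom_iff [IsDomain R] (h2 : (2 : R) ≠ 0) {F : R[X]} {α : R} :
    (lattesDenom F).IsRoot α ↔ F.IsRoot α := by
  have h4 : (4 : R) ≠ 0 := by
    rw [show (4 : R) = 2 * 2 by norm_num]
    exact mul_ne_zero h2 h2
  simp [lattesDenom, h4]

theorem one_lt_rootMultiplicity_of_isRoot_lattes [IsDomain R] (h2 : (2 : R) ≠ 0) {F : R[X]}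
    (hF : F ≠ 0) {α : R} (h_num : (lattesNum F).IsRoot α) (h_denom : (lattesDenom F).IsRoot α) :
    1 < F.rootMultiplicity α := by
  have h_root : F.IsRoot α := (isRoot_lattesDenom_iff h2).mp h_denom
  have h_deriv : (derivative F).IsRoot α :=
    pow_eq_zero_iff two_ne_zero |>.mp <| (eval_lattesNum_of_isRoot h_root).symm.trans h_num
  exact (one_lt_rootMultiplicity_iff_isRoot hF).mpr ⟨h_root, h_deriv⟩

theorem natDegree_lattesNum_le {F : R[X]} (hF : F.natDegree ≤ 3) :
    (lattesNum F).natDegree ≤ 4 := by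
  have hF' : (derivative F).natDegree ≤ 2 := (natDegree_derivative_le F).trans (by lia)
  have hXF : (X * F).natDegree ≤ 4 := natDegree_mul_le_of_le (m := 1) natDegree_X_le hF
  exact natDegree_sub_le_of_le (natDegree_pow_le_of_le 2 hF') ((natDegree_C_mul_le _ _).trans hXF)
    |>.trans (max_self 4).le

theorem coeff_four_lattesNum {F : R[X]} (hF : F.natDegree ≤ 3) :
    (lattesNum F).coeff 4 = (3 * F.coeff 3) ^ 2 - 8 * F.coeff 3 := by
  have hF' : (derivative F).natDegree ≤ 2 := (natDegree_derivative_le F).trans (by lia)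
  have h_sq : (derivative F ^ 2).coeff 4 = (derivative F).coeff 2 ^ 2 :=
    coeff_pow_of_natDegree_le (m := 2) hF'
  rw [lattesNum, coeff_sub, h_sq, coeff_derivative, coeff_C_mul, coeff_X_mul]
  push_cast
  ring

theorem natDegree_lattesDenom_le (F : R[X]) : (lattesDenom F).natDegree ≤ F.natDegree :=
  natDegree_C_mul_le 4 F

theorem coeff_four_lattesNum_of_monic {F : R[X]} (hmonic : F.Monic) (hdeg : F.natDegree = 3) :
    (lattesNum F).coeff 4 = 1 := by
  have h_lead : F.coeff 3 = 1 := hdeg ▸ hmonic.coeff_natDegree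
  rw [coeff_four_lattesNum hdeg.le, h_lead]
  norm_num

theorem monic_lattesNum {F : R[X]} (hmonic : F.Monic) (hdeg : F.natDegree = 3) :
    (lattesNum F).Monic :=
  monic_of_natDegree_le_of_coeff_eq_one 4 (natDegree_lattesNum_le hdeg.le)
    (coeff_four_lattesNum_of_monic hmonic hdeg)

end Lattes

theorem lattes_map_has_simple_good_reduction_general {R k : Type*} [CommRing R] [Field k]
    (ψ : R →+* k) (hchar : ψ 2 ≠ 0) {F : R[X]} (hmonic : F.Monic) (hdeg : F.natDegree = 3)
    (hgood : ∀ α : k, (F.map ψ).rootMultiplicity α ≤ 1) :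
    (∀ α : k, ¬(((lattesNum F).map ψ).eval α = 0 ∧ ((lattesDenom F).map ψ).eval α = 0)) ∧
      (lattesNum F).Monic ∧ NoCommonProjectiveRoot ψ 4 (lattesNum F) (lattesDenom F) := by
  have h_num_deg : (lattesNum F).natDegree ≤ 4 := natDegree_lattesNum_le hdeg.le
  have h_denom_deg : (lattesDenom F).natDegree ≤ 4 :=
    (natDegree_lattesDenom_le F).trans (by lia)
  have h_num_monic : (lattesNum F).Monic := monic_lattesNum hmonic hdeg
  have h_affine (α : k) :
      ¬(((lattesNum F).map ψ).eval α = 0 ∧ ((lattesDenom F).map ψ).eval α = 0) := by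
    rw [lattesNum_map, lattesDenom_map]
    rintro ⟨h_num, h_denom⟩
    exact (hgood α).not_gt <| one_lt_rootMultiplicity_of_isRoot_lattes
      (map_ofNat ψ 2 ▸ hchar) (hmonic.map ψ).ne_zero h_num h_denom
  refine ⟨h_affine, h_num_monic, (noCommonProjectiveRoot_iff ψ h_num_deg h_denom_deg).mpr
    ⟨h_affine, fun ⟨h_infinity, _⟩ => ?_⟩⟩
  rw [coeff_four_lattesNum_of_monic hmonic hdeg, map_one] at h_infinity
  exact one_ne_zero h_infinity

theorem lattes_map_has_simple_good_reduction
    (K : Type*) [Field K] [NumberField K]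
    (v : HeightOneSpectrum (𝓞 K))
    (Ω : Type*) [Field Ω] [IsAlgClosed Ω]
    -- reduction from `o_v` to the algebraic closure of the residue field at `v`
    (ψ : Localization.AtPrime v.asIdeal →+* Ω)
    (hψ : RingHom.ker ψ = IsLocalRing.maximalIdeal (Localization.AtPrime v.asIdeal))
    -- the residue characteristic of `v` is not `2`
    (hchar : ψ 2 ≠ 0)
    -- `F` is a monic cubic whose reduction has no repeated roots
    (F : Polynomial (Localization.AtPrime v.asIdeal))
    (hmonic : F.Monic) (hdeg : F.natDegree = 3)
    (hgood : ∀ α : Ω, (F.map ψ).rootMultiplicity α ≤ 1) :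
    -- the reductions of `(F')² − 8xF` and `4F` have no common (affine) root ...
    (∀ α : Ω, ¬(((derivative F ^ 2 - C 8 * (X * F)).map ψ).eval α = 0 ∧
        ((C 4 * F).map ψ).eval α = 0)) ∧
    -- ... the leading coefficient of `(F')² − 8xF` is a `v`-adic unit ...
    IsUnit (derivative F ^ 2 - C 8 * (X * F)).leadingCoeff ∧
    -- ... and consequently the Lattès map `((F')² − 8xF)/(4F)` has simple good
    -- reduction at `v`: no common projective root after reduction
    (∀ s t : Ω, ¬(s = 0 ∧ t = 0) →
      ¬(homEval ψ 4 (derivative F ^ 2 - C 8 * (X * F)) s t = 0 ∧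
        homEval ψ 4 (C 4 * F) s t = 0)) := by
  obtain ⟨h_affine, h_num_monic, h_proj⟩ :=
    lattes_map_has_simple_good_reduction_general ψ hchar hmonic hdeg hgood
  exact ⟨h_affine, h_num_monic.leadingCoeff ▸ isUnit_one, h_proj⟩

end
end

section
/- Let L be an algebraically closed field of characteristic 0, let Y be a finite subset of P¹(L), and let n > 1 be an integer. Then there are only finitely many morphisms φ: P¹_L → P¹_L of degree n satisfying all of: (1) every ramification point of φ lies in Y; (2) every critical value of φ (i.e., every point of φ(Supp R_φ)) lies in Y; and (3) φ has at least 3 distinct ramification points. -/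
/-!
Statement 8.  Let `L` be an algebraically closed field of characteristic `0`,
`Y ⊆ ℙ¹(L)` finite, `n > 1`.  There are only finitely many morphisms
`φ : ℙ¹_L → ℙ¹_L` of degree `n` with all ramification points in `Y`, all critical
values in `Y`, and at least `3` distinct ramification points.

A morphism of degree `n` is encoded by a pair of homogeneous binary forms `(P, Q)`
of degree `n` with no common projective zero; two pairs give the same morphism
exactly when they are proportional, so "finitely many morphisms" means a finite set
of pairs such that every such morphism is given by a scalar multiple of a member.
-/

noncomputable section

namespace CGR

variable {F : Type*} [Field F]

/-- The homogeneous Wronskian of a pair of binary forms. -/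
def wronskian (P Q : MvPolynomial (Fin 2) F) : MvPolynomial (Fin 2) F :=
  MvPolynomial.pderiv 0 P * MvPolynomial.pderiv 1 Q -
    MvPolynomial.pderiv 1 P * MvPolynomial.pderiv 0 Q

/-- The binary forms `P, Q` have no common projective root. -/
def NoCommonRoot (P Q : MvPolynomial (Fin 2) F) : Prop :=
  ∀ u : Fin 2 → F, MvPolynomial.eval u P = 0 → MvPolynomial.eval u Q = 0 → u = 0

/-- The set of ramification points in `ℙ¹(F)` of the morphism `[P : Q]`:
the projective zero locus of the homogeneous Wronskian. -/
def ramPoints (P Q : MvPolynomial (Fin 2) F) : Set (Projectivization F (Fin 2 → F)) :=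
  {x | MvPolynomial.eval x.rep (wronskian P Q) = 0}

/-- The set of critical values in `ℙ¹(F)` of the morphism `[P : Q]`: the images of
the ramification points. -/
def critValues (P Q : MvPolynomial (Fin 2) F) : Set (Projectivization F (Fin 2 → F)) :=
  {y | ∃ (u : Fin 2 → F) (_ : u ≠ 0)
      (h : ![MvPolynomial.eval u P, MvPolynomial.eval u Q] ≠ 0),
    MvPolynomial.eval u (wronskian P Q) = 0 ∧ Projectivization.mk F _ h = y}

end CGR

open CGR

/-!
A morphism `φ = [P : Q]` of degree `n` is determined by its ramification divisor
`R_φ = ∑ (e_x - 1) x` together with the critical values `φ(x)`, as soon as there are at least three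
ramification points. Indeed `R_φ` is the divisor of zeros of the Wronskian of `P` and `Q`, of degree
`2n - 2`, and `φ` takes the value `φ(x)` to order `e_x` at `x`. If `φ' = [P' : Q']` has the same
data, then the form `P Q' - P' Q`, of degree `2n`, vanishes to order at least `e_x` at each
ramification point, so that it has at least `deg R_φ + #Supp R_φ ≥ 2n + 1` zeros and must be `0`.
Only finitely many divisors of degree `2n - 2`, with points labelled by values, are supported on a
finite set.
-/

namespace CGR

open MvPolynomial
open scoped LinearAlgebra.Projectivization

variable {K : Type*} [Field K]

section HomogeneousPolynomials

variable {σ R A : Type*}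

theorem aeval_smul_of_isHomogeneous [CommSemiring R] [CommSemiring A] [Algebra R A]
    {G : MvPolynomial σ R} {d : ℕ} (hG : G.IsHomogeneous d) (c : A) (x : σ → A) :
    aeval (c • x) G = c ^ d * aeval x G := by
  simp only [aeval_def, eval₂_eq, Finset.mul_sum]
  refine Finset.sum_congr rfl fun e he => ?_
  simp only [Pi.smul_apply, smul_eq_mul, mul_pow, Finset.prod_mul_distrib,
    Finset.prod_pow_eq_pow_sum]
  rw [← hG.degree_eq_sum_deg_support he]
  ring

theorem isHomogeneous_of_mul_left [CommRing R] [NoZeroDivisors R] {G H : MvPolynomial σ R} {d e : ℕ}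
    (hG : G.IsHomogeneous d) (hG0 : G ≠ 0) (hGH : (G * H).IsHomogeneous (d + e)) :
    H.IsHomogeneous e := by
  classical
  let := gradedAlgebra (σ := σ) (R := R)
  have h := DirectSum.coe_decompose_mul_add_of_left_mem (homogeneousSubmodule σ R)
    (j := e) (b := H) hG
  rw [DirectSum.decompose_of_mem_same _ hGH] at h
  have hH : H = DirectSum.decompose (homogeneousSubmodule σ R) H e := mul_left_cancel₀ hG0 h
  rw [hH]
  exact SetLike.coe_mem (DirectSum.decompose (homogeneousSubmodule σ R) H e)

end HomogeneousPolynomials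

section LinearForms

/-- For `u ≠ 0`, the linear form vanishing exactly on the line spanned by `u`. The order of
vanishing of a form at the point of `ℙ¹` represented by `u` is encoded as the exponent of
`linearForm u` in its factorization. -/
def linearForm (u : Fin 2 → K) : MvPolynomial (Fin 2) K :=
  C (u 1) * X 0 - C (u 0) * X 1

theorem isHomogeneous_linearForm (u : Fin 2 → K) : (linearForm u).IsHomogeneous 1 :=
  (isHomogeneous_C_mul_X _ _).sub (isHomogeneous_C_mul_X _ _)

theorem eval_linearForm (u v : Fin 2 → K) : eval v (linearForm u) = u 1 * v 0 - u 0 * v 1 := by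
  simp [linearForm]

theorem eval_eq_zero_of_linearForm_dvd {u : Fin 2 → K} {G : MvPolynomial (Fin 2) K}
    (h : linearForm u ∣ G) : eval u G = 0 := by
  obtain ⟨H, rfl⟩ := h
  rw [map_mul, eval_linearForm]
  ring

theorem prime_linearForm {u : Fin 2 → K} (hu : u ≠ 0) : Prime (linearForm u) := by
  have hcoeff : ∀ i, (linearForm u).coeff (Finsupp.single i 1) = ![u 1, -u 0] i := by
    intro i
    fin_cases i <;> simp [linearForm, Finsupp.single_left_inj, coeff_C_mul, coeff_X]
  obtain ⟨i, hi⟩ : ∃ i, ![u 1, -u 0] i ≠ 0 := by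
    by_contra! h
    exact hu (funext fun i => by fin_cases i; exacts [by simpa using h 1, h 0])
  rw [← hcoeff] at hi
  refine (irreducible_of_totalDegree_eq_one ?_ fun c hc => ?_).prime
  · exact (isHomogeneous_linearForm u).totalDegree (ne_zero_iff.2 ⟨_, hi⟩)
  · exact isUnit_of_dvd_unit (hc _) hi.isUnit

theorem isRelPrime_linearForm_rep {x y : ℙ K (Fin 2 → K)} (hxy : x ≠ y) :
    IsRelPrime (linearForm x.rep) (linearForm y.rep) := by
  rw [(prime_linearForm x.rep_nonzero).irreducible.isRelPrime_iff_not_dvd]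
  intro hdvd
  have hdet : y.rep 1 * x.rep 0 - y.rep 0 * x.rep 1 = 0 := by
    rw [← eval_linearForm, eval_eq_zero_of_linearForm_dvd hdvd]
  have hunit : IsUnit (Matrix.of ![x.rep, y.rep]) := Matrix.linearIndependent_rows_iff_isUnit.1
    (Projectivization.linearIndependent_pair_iff_ne.2 hxy)
  refine (Matrix.isUnit_iff_isUnit_det _).1 hunit |>.ne_zero ?_
  rw [Matrix.det_fin_two]
  change x.rep 0 * y.rep 1 - x.rep 1 * y.rep 0 = 0
  linear_combination hdet

theorem linearForm_dvd_C_mul_X_sub (u : Fin 2 → K) (i j : Fin 2) :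
    linearForm u ∣ C (u i) * X j - X i * C (u j) := by
  fin_cases i <;> fin_cases j <;>
    simp only [linearForm, Fin.zero_eta, Fin.mk_one, Fin.isValue]
  exacts [⟨0, by ring⟩, ⟨-1, by ring⟩, ⟨1, by ring⟩, ⟨0, by ring⟩]

theorem linearForm_dvd_of_eval_eq_zero {u : Fin 2 → K} (hu : u ≠ 0) {G : MvPolynomial (Fin 2) K}
    {d : ℕ} (hG : G.IsHomogeneous d) (h : eval u G = 0) : linearForm u ∣ G := by
  -- Modulo `linearForm u`: `u i ^ d * G(X) = G(u i • X) ≡ G(X i • u) = X i ^ d * G(u) = 0`.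
  obtain ⟨i, hi⟩ := Function.ne_iff.1 hu
  let π := Ideal.Quotient.mkₐ K (Ideal.span {linearForm u})
  have hX : ∀ j, π (C (u i) * X j) = π (X i * C (u j)) := fun j =>
    Ideal.Quotient.eq.2 (Ideal.mem_span_singleton.2 (linearForm_dvd_C_mul_X_sub u i j))
  have hπG : π (aeval ((C (u i) : MvPolynomial (Fin 2) K) • X) G) =
      π (aeval ((X i : MvPolynomial (Fin 2) K) • fun j => C (u j)) G) := by
    rw [comp_aeval_apply, comp_aeval_apply]
    exact congrArg (aeval · G) (funext hX)
  have hCu : aeval (fun j => (C (u j) : MvPolynomial (Fin 2) K)) G = 0 :=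
    (aeval_algebraMap_apply _ u G).trans ((congrArg _ h).trans (map_zero _))
  rw [aeval_smul_of_isHomogeneous hG, aeval_smul_of_isHomogeneous hG, hCu, mul_zero, map_zero,
    aeval_X_left_apply] at hπG
  have hdvd := Ideal.mem_span_singleton.1 (Ideal.Quotient.eq_zero_iff_mem.1 hπG)
  exact (((isUnit_iff_ne_zero.2 hi).map C).pow d).dvd_mul_left.1 hdvd

end LinearForms

section BinaryForms

theorem isRelPrime_of_noCommonRoot [IsAlgClosed K] {P Q : MvPolynomial (Fin 2) K}
    (h : NoCommonRoot P Q) : IsRelPrime P Q := by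
  -- A common divisor vanishes at most at the origin, so by the Nullstellensatz it divides powers of
  -- both variables.
  intro d hP hQ
  have hX : ∀ i, ∃ k, d ∣ X i ^ k := fun i => by
    have hmem : (X i : MvPolynomial (Fin 2) K) ∈
        vanishingIdeal K (zeroLocus K (Ideal.span {d})) := fun u hu => by
      have hd : eval u d = 0 := hu d (Ideal.mem_span_singleton_self d)
      have hroot {G : MvPolynomial (Fin 2) K} (hG : d ∣ G) : eval u G = 0 :=
        zero_dvd_iff.1 (hd ▸ map_dvd (eval u) hG)
      simp [h u (hroot hP) (hroot hQ)]
    rw [vanishingIdeal_zeroLocus_eq_radical] at hmem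
    exact hmem.imp fun k => Ideal.mem_span_singleton.1
  obtain ⟨⟨k, hk⟩, l, hl⟩ := hX 0, hX 1
  have hX01 : IsRelPrime (X 0 : MvPolynomial (Fin 2) K) (X 1) := by
    rw [(X_prime (i := 0)).irreducible.isRelPrime_iff_not_dvd, X_dvd_X]
    simp
  exact hX01.pow hk hl

theorem exists_linearForm_rep_dvd [IsAlgClosed K] {G : MvPolynomial (Fin 2) K} {d : ℕ}
    (hG : G.IsHomogeneous d) (hd : d ≠ 0) : ∃ x : ℙ K (Fin 2 → K), linearForm x.rep ∣ G := by
  have hroot : ¬ NoCommonRoot G G := fun h => by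
    have hunit := isRelPrime_of_noCommonRoot h dvd_rfl dvd_rfl
    have hdeg := (isUnit_iff_totalDegree_of_isReduced.1 hunit).2
    exact hd ((hG.totalDegree hunit.ne_zero).symm.trans hdeg)
  simp only [NoCommonRoot, not_forall] at hroot
  obtain ⟨u, hGu, -, hu⟩ := hroot
  obtain ⟨a, ha⟩ := Projectivization.exists_smul_eq_mk_rep K u hu
  refine ⟨.mk K u hu, linearForm_dvd_of_eval_eq_zero (Projectivization.rep_nonzero _) hG ?_⟩
  rw [← ha]
  exact (aeval_smul_of_isHomogeneous hG (a : K) u).trans (mul_eq_zero_of_right _ hGu)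

/-- The binary form whose divisor of zeros on `ℙ¹` is `s`, points counted with multiplicity. -/
def formOfRoots (s : Multiset (ℙ K (Fin 2 → K))) : MvPolynomial (Fin 2) K :=
  (s.map fun x => linearForm x.rep).prod

theorem exists_associated_formOfRoots [IsAlgClosed K] {G : MvPolynomial (Fin 2) K} {d : ℕ}
    (hG : G.IsHomogeneous d) (hG0 : G ≠ 0) :
    ∃ s : Multiset (ℙ K (Fin 2 → K)), s.card = d ∧ Associated (formOfRoots s) G := by
  induction d generalizing G with
  | zero =>
    have hconst : G = C (G.coeff 0) := totalDegree_eq_zero_iff_eq_C.1 (hG.totalDegree hG0)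
    refine ⟨0, rfl, ?_⟩
    rw [formOfRoots, Multiset.map_zero, Multiset.prod_zero, hconst]
    refine (associated_one_iff_isUnit.2 (.map C (isUnit_iff_ne_zero.2 fun h => hG0 ?_))).symm
    rw [hconst, h, map_zero]
  | succ d ih =>
    obtain ⟨x, H, rfl⟩ := exists_linearForm_rep_dvd hG d.succ_ne_zero
    have hH : H.IsHomogeneous d := isHomogeneous_of_mul_left (isHomogeneous_linearForm x.rep)
      (left_ne_zero_of_mul hG0) (add_comm d 1 ▸ hG)
    obtain ⟨s, hs, hsH⟩ := ih hH (right_ne_zero_of_mul hG0)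
    refine ⟨x ::ₘ s, by rw [Multiset.card_cons, hs], ?_⟩
    rw [formOfRoots, Multiset.map_cons, Multiset.prod_cons]
    exact hsH.mul_left _

theorem linearForm_pow_count_dvd_formOfRoots [DecidableEq (ℙ K (Fin 2 → K))]
    (s : Multiset (ℙ K (Fin 2 → K))) (x : ℙ K (Fin 2 → K)) :
    linearForm x.rep ^ s.count x ∣ formOfRoots s := by
  have hle := Multiset.map_le_map (f := fun x : ℙ K (Fin 2 → K) => linearForm x.rep)
    (Multiset.le_count_iff_replicate_le.1 (le_refl (s.count x)))
  simpa [formOfRoots] using Multiset.prod_dvd_prod_of_le hle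

theorem eval_rep_formOfRoots_eq_zero_iff {s : Multiset (ℙ K (Fin 2 → K))}
    {x : ℙ K (Fin 2 → K)} : eval x.rep (formOfRoots s) = 0 ↔ x ∈ s := by
  rw [formOfRoots, map_multiset_prod, Multiset.prod_eq_zero_iff]
  simp only [Multiset.map_map, Multiset.mem_map, Function.comp_apply]
  refine ⟨?_, fun hx => ⟨x, hx, eval_eq_zero_of_linearForm_dvd dvd_rfl⟩⟩
  rintro ⟨y, hy, hxy⟩
  suffices x = y from this ▸ hy
  by_contra hne
  exact (prime_linearForm x.rep_nonzero).not_isUnit (isRelPrime_linearForm_rep hne dvd_rfl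
    (linearForm_dvd_of_eval_eq_zero x.rep_nonzero (isHomogeneous_linearForm _) hxy))

theorem eq_zero_of_linearForm_pow_count_succ_dvd {D : MvPolynomial (Fin 2) K}
    [DecidableEq (ℙ K (Fin 2 → K))] {s : Multiset (ℙ K (Fin 2 → K))}
    (hdvd : ∀ x ∈ s, linearForm x.rep ^ (s.count x + 1) ∣ D)
    (hdeg : D.totalDegree < s.card + s.toFinset.card) : D = 0 := by
  by_contra hD
  let G := ∏ x ∈ s.toFinset, linearForm x.rep ^ (s.count x + 1)
  have hGD : G ∣ D := Finset.prod_dvd_of_isRelPrime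
    (fun x _ y _ hxy => (isRelPrime_linearForm_rep hxy).pow)
    fun x hx => hdvd x (Multiset.mem_toFinset.1 hx)
  have hG : G.IsHomogeneous (∑ x ∈ s.toFinset, (s.count x + 1)) :=
    .prod _ _ _ fun x _ => by simpa using (isHomogeneous_linearForm x.rep).pow (s.count x + 1)
  have hle := totalDegree_le_of_dvd_of_isDomain hGD hD
  rw [hG.totalDegree (ne_zero_of_dvd_ne_zero hD hGD), Finset.sum_add_distrib,
    Multiset.toFinset_sum_count_eq, Finset.sum_const, smul_eq_mul, mul_one] at hle
  exact hle.not_gt hdeg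

end BinaryForms

section Wronskian

theorem wronskian_pow_succ_mul_left (G H Q : MvPolynomial (Fin 2) K) (k : ℕ) :
    wronskian (G ^ (k + 1) * H) Q =
      G ^ (k + 1) * wronskian H Q + (k + 1 : ℕ) * (G ^ k * H * wronskian G Q) := by
  simp only [wronskian, Derivation.leibniz, Derivation.leibniz_pow, smul_eq_mul, nsmul_eq_mul,
    Nat.add_sub_cancel]
  ring

theorem isHomogeneous_wronskian {P Q : MvPolynomial (Fin 2) K} {n : ℕ}
    (hP : P.IsHomogeneous n) (hQ : Q.IsHomogeneous n) :
    (wronskian P Q).IsHomogeneous (2 * n - 2) := by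
  rw [show 2 * n - 2 = (n - 1) + (n - 1) by omega]
  exact (hP.pderiv.mul hQ.pderiv).sub (hP.pderiv.mul hQ.pderiv)

theorem wronskian_linearForm_left (u : Fin 2 → K) (Q : MvPolynomial (Fin 2) K) :
    wronskian (linearForm u) Q = C (u 0) * pderiv 0 Q + C (u 1) * pderiv 1 Q := by
  simp [wronskian, linearForm, add_comm]

theorem eval_wronskian_linearForm_self {Q : MvPolynomial (Fin 2) K} {n : ℕ}
    (hQ : Q.IsHomogeneous n) (u : Fin 2 → K) :
    eval u (wronskian (linearForm u) Q) = n * eval u Q := by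
  have euler := congrArg (eval u) hQ.sum_X_mul_pderiv
  rw [Fin.sum_univ_two] at euler
  simpa [wronskian_linearForm_left] using euler

-- `wronskian · Q` lowers a positive order of vanishing at `u` by exactly one, because
-- `wronskian (linearForm u) Q` takes the value `n * Q(u) ≠ 0` there.
theorem linearForm_pow_succ_dvd_of_dvd_wronskian [CharZero K] {u : Fin 2 → K} (hu : u ≠ 0)
    {R Q : MvPolynomial (Fin 2) K} {n m : ℕ} (hQ : Q.IsHomogeneous n) (hn : n ≠ 0)
    (hQu : eval u Q ≠ 0) (hR : linearForm u ∣ R) (hW : linearForm u ^ m ∣ wronskian R Q) :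
    linearForm u ^ (m + 1) ∣ R := by
  have hprime := prime_linearForm hu
  induction m with
  | zero => simpa using hR
  | succ k ih =>
    obtain ⟨S, rfl⟩ := ih ((pow_dvd_pow _ k.le_succ).trans hW)
    have hndvd : ¬ linearForm u ∣ (k + 1 : ℕ) * wronskian (linearForm u) Q := fun h => by
      have h0 := eval_eq_zero_of_linearForm_dvd h
      rw [map_mul, map_natCast, eval_wronskian_linearForm_self hQ] at h0
      simp [hn, hQu, Nat.cast_add_one_ne_zero] at h0
    have hS : linearForm u ∣ S * ((k + 1 : ℕ) * wronskian (linearForm u) Q) := by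
      rw [wronskian_pow_succ_mul_left, dvd_add_right (dvd_mul_right _ _), mul_assoc, mul_left_comm,
        pow_succ, mul_dvd_mul_iff_left (pow_ne_zero k hprime.ne_zero), mul_left_comm] at hW
      exact hW
    rw [pow_succ]
    exact mul_dvd_mul_left _ ((hprime.dvd_or_dvd hS).resolve_right hndvd)

end Wronskian

section Fibers

/-- The binary form cutting out the fibre of `[P : Q]` over the point of `ℙ¹` with homogeneous
coordinates `v`. -/
def fiberForm (P Q : MvPolynomial (Fin 2) K) (v : Fin 2 → K) : MvPolynomial (Fin 2) K :=
  C (v 1) * P - C (v 0) * Q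

theorem isHomogeneous_fiberForm {P Q : MvPolynomial (Fin 2) K} {n : ℕ}
    (hP : P.IsHomogeneous n) (hQ : Q.IsHomogeneous n) (v : Fin 2 → K) :
    (fiberForm P Q v).IsHomogeneous n :=
  (hP.C_mul _).sub (hQ.C_mul _)

theorem wronskian_fiberForm_left (P Q : MvPolynomial (Fin 2) K) (v : Fin 2 → K) :
    wronskian (fiberForm P Q v) P = C (v 0) * wronskian P Q := by
  simp only [wronskian, fiberForm, map_sub, pderiv_C_mul]
  ring

theorem wronskian_fiberForm_right (P Q : MvPolynomial (Fin 2) K) (v : Fin 2 → K) :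
    wronskian (fiberForm P Q v) Q = C (v 1) * wronskian P Q := by
  simp only [wronskian, fiberForm, map_sub, pderiv_C_mul]
  ring

theorem linearForm_pow_succ_dvd_fiberForm [CharZero K] {P Q : MvPolynomial (Fin 2) K} {n m : ℕ}
    (hP : P.IsHomogeneous n) (hQ : Q.IsHomogeneous n) (hn : n ≠ 0) (hPQ : NoCommonRoot P Q)
    {u v : Fin 2 → K} (hu : u ≠ 0) (huv : eval u (fiberForm P Q v) = 0)
    (hW : linearForm u ^ m ∣ wronskian P Q) : linearForm u ^ (m + 1) ∣ fiberForm P Q v := by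
  have hfib := linearForm_dvd_of_eval_eq_zero hu (isHomogeneous_fiberForm hP hQ v) huv
  by_cases hPu : eval u P = 0
  · have hQu : eval u Q ≠ 0 := fun hQu => hu (hPQ u hPu hQu)
    refine linearForm_pow_succ_dvd_of_dvd_wronskian hu hQ hn hQu hfib ?_
    exact wronskian_fiberForm_right P Q v ▸ hW.mul_left _
  · refine linearForm_pow_succ_dvd_of_dvd_wronskian hu hP hn hPu hfib ?_
    exact wronskian_fiberForm_left P Q v ▸ hW.mul_left _

theorem dvd_cross_of_dvd_fiberForm {d P Q P' Q' : MvPolynomial (Fin 2) K} {v : Fin 2 → K}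
    (hv : v ≠ 0) (h : d ∣ fiberForm P Q v) (h' : d ∣ fiberForm P' Q' v) :
    d ∣ P * Q' - P' * Q := by
  have hP : C (v 0) * (P * Q' - P' * Q) = fiberForm P Q v * P' - fiberForm P' Q' v * P := by
    simp only [fiberForm]
    ring
  have hQ : C (v 1) * (P * Q' - P' * Q) = fiberForm P Q v * Q' - fiberForm P' Q' v * Q := by
    simp only [fiberForm]
    ring
  have hdvd : ∀ i, d ∣ C (v i) * (P * Q' - P' * Q) := Fin.forall_fin_two.2
    ⟨hP ▸ (h.mul_right _).sub (h'.mul_right _), hQ ▸ (h.mul_right _).sub (h'.mul_right _)⟩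
  obtain ⟨i, hi⟩ := Function.ne_iff.1 hv
  exact ((isUnit_iff_ne_zero.2 hi).map C).dvd_mul_left.1 (hdvd i)

end Fibers

section Proportionality

theorem exists_isUnit_of_isRelPrime_of_cross_eq {R : Type*} [CommMonoidWithZero R]
    [IsCancelMulZero R] [DecompositionMonoid R] {a b a' b' : R}
    (h : IsRelPrime a b) (h' : IsRelPrime a' b') (heq : a * b' = a' * b) :
    ∃ w, IsUnit w ∧ a = w * a' ∧ b = w * b' := by
  have ha : a ∣ a' := h.dvd_of_dvd_mul_right ⟨b', heq.symm⟩
  have ha' : a' ∣ a := h'.dvd_of_dvd_mul_right ⟨b, heq⟩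
  rcases eq_or_ne a' 0 with rfl | h0
  · obtain rfl := zero_dvd_iff.1 ha'
    obtain ⟨w, hw⟩ := (isRelPrime_zero_left.1 h').dvd (a := b)
    refine ⟨w, ?_, by rw [mul_zero], hw.trans (mul_comm _ _)⟩
    exact isUnit_of_mul_isUnit_right (hw ▸ isRelPrime_zero_left.1 h)
  · obtain ⟨w, rfl⟩ := associated_of_dvd_dvd ha' ha
    refine ⟨w, w.isUnit, mul_comm _ _, mul_left_cancel₀ h0 ?_⟩
    rw [← heq, mul_assoc]

theorem exists_units_smul_of_cross_eq {σ : Type*} {P Q P' Q' : MvPolynomial σ K}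
    (h : IsRelPrime P Q) (h' : IsRelPrime P' Q') (heq : P * Q' = P' * Q) :
    ∃ c : Kˣ, P = (c : K) • P' ∧ Q = (c : K) • Q' := by
  obtain ⟨w, hw, hP, hQ⟩ := exists_isUnit_of_isRelPrime_of_cross_eq h h' heq
  obtain ⟨c, hc, rfl⟩ := isUnit_iff_eq_C_of_isReduced.1 hw
  exact ⟨hc.unit, by rwa [smul_eq_C_mul], by rwa [smul_eq_C_mul]⟩

end Proportionality

section Finiteness

variable {α β : Type*}

theorem finite_setOf_multiset_card_eq {S : Set α} (hS : S.Finite) (k : ℕ) :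
    {m : Multiset α | m.card = k ∧ ∀ z ∈ m, z ∈ S}.Finite := by
  classical
  refine ((hS.toFinset.sym k).finite_toSet.image Sym.toMultiset).subset ?_
  rintro m ⟨hk, hm⟩
  exact ⟨⟨m, hk⟩, Finset.mem_sym_iff.2 fun z hz => hS.mem_toFinset.2 (hm z hz), rfl⟩

theorem exists_finite_representatives {s : Set α} {U : Set β} (hU : U.Finite) {r : α → β → Prop}
    (h : ∀ a ∈ s, ∃ d ∈ U, r a d) :
    ∃ t ⊆ s, t.Finite ∧ ∀ a ∈ s, ∃ b ∈ t, ∃ d ∈ U, r a d ∧ r b d := by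
  choose f hfU hf using fun a : s => h a a.2
  obtain ⟨t, -, ht⟩ := Set.exists_subset_bijOn Set.univ f
  have htfin : t.Finite :=
    ht.finite_iff_finite.2 (hU.subset (by rintro _ ⟨a, -, rfl⟩; exact hfU a))
  refine ⟨_, Subtype.coe_image_subset s t, htfin.image _, ?_⟩
  intro a ha
  obtain ⟨b, hb, hba⟩ := ht.surjOn ⟨⟨a, ha⟩, trivial, rfl⟩
  exact ⟨b, ⟨b, hb, rfl⟩, _, hfU ⟨a, ha⟩, hf ⟨a, ha⟩, hba ▸ hf b⟩

end Finiteness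

section Morphisms

/-- The pair of binary forms `(P, Q)` represents a morphism `[P : Q] : ℙ¹ → ℙ¹` of degree `n`. -/
structure IsMorphism (P Q : MvPolynomial (Fin 2) K) (n : ℕ) : Prop where
  left : P.IsHomogeneous n
  right : Q.IsHomogeneous n
  noCommonRoot : NoCommonRoot P Q

/-- The multiset `m` is the ramification divisor of the morphism `[P : Q]`, each of its points `x`
being paired with the critical value `[P : Q] (x)`. The ramification divisor is encoded as the
divisor of zeros of the Wronskian, which is correct in characteristic `0`. -/
structure IsRamificationPortrait (P Q : MvPolynomial (Fin 2) K)
    (m : Multiset (ℙ K (Fin 2 → K) × ℙ K (Fin 2 → K))) : Prop where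
  divisor : Associated (formOfRoots (m.map Prod.fst)) (wronskian P Q)
  value : ∀ z ∈ m, eval z.1.rep (fiberForm P Q z.2.rep) = 0

variable {P Q P' Q' : MvPolynomial (Fin 2) K} {n : ℕ}
  {m : Multiset (ℙ K (Fin 2 → K) × ℙ K (Fin 2 → K))}

theorem wronskian_ne_zero_of_finite_ramPoints [Infinite K] (h : (ramPoints P Q).Finite) :
    wronskian P Q ≠ 0 := by
  classical
  intro hW
  have : Infinite (ℙ K (Fin 2 → K)) :=
    (OnePoint.equivProjectivization K).infinite_iff.1 inferInstance
  refine Set.infinite_univ (h.subset fun x _ => ?_)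
  change eval x.rep (wronskian P Q) = 0
  rw [hW, map_zero]

theorem IsRamificationPortrait.mem_ramPoints_iff (hm : IsRamificationPortrait P Q m)
    {x : ℙ K (Fin 2 → K)} : x ∈ ramPoints P Q ↔ x ∈ m.map Prod.fst := by
  rw [← eval_rep_formOfRoots_eq_zero_iff]
  exact (hm.divisor.map (eval x.rep)).eq_zero_iff.symm

theorem IsMorphism.exists_value (h : IsMorphism P Q n) (x : ℙ K (Fin 2 → K)) :
    ∃ y : ℙ K (Fin 2 → K), eval x.rep (fiberForm P Q y.rep) = 0 ∧
      (x ∈ ramPoints P Q → y ∈ critValues P Q) := by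
  have hv : ![eval x.rep P, eval x.rep Q] ≠ 0 := fun hv =>
    x.rep_nonzero (h.noCommonRoot _ (congrFun hv 0) (congrFun hv 1))
  obtain ⟨a, ha⟩ := Projectivization.exists_smul_eq_mk_rep K _ hv
  refine ⟨.mk K _ hv, ?_, fun hx => ⟨x.rep, x.rep_nonzero, hv, hx, rfl⟩⟩
  rw [← ha]
  simp only [fiberForm, Units.smul_def, Pi.smul_apply, smul_eq_mul, Matrix.cons_val_zero,
    Matrix.cons_val_one, map_sub, map_mul, eval_C]
  ring

theorem IsMorphism.exists_isRamificationPortrait [IsAlgClosed K] (h : IsMorphism P Q n)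
    (hfin : (ramPoints P Q).Finite) :
    ∃ m : Multiset (ℙ K (Fin 2 → K) × ℙ K (Fin 2 → K)), m.card = 2 * n - 2 ∧
      (∀ z ∈ m, z ∈ ramPoints P Q ×ˢ critValues P Q) ∧ IsRamificationPortrait P Q m := by
  obtain ⟨s, hcard, hs⟩ := exists_associated_formOfRoots (isHomogeneous_wronskian h.left h.right)
    (wronskian_ne_zero_of_finite_ramPoints hfin)
  choose f hf hcrit using h.exists_value
  have hm : IsRamificationPortrait P Q (s.map fun x => (x, f x)) := by
    refine ⟨by simpa [Multiset.map_map] using hs, fun z hz => ?_⟩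
    obtain ⟨x, -, rfl⟩ := Multiset.mem_map.1 hz
    exact hf x
  refine ⟨_, by rwa [Multiset.card_map], fun z hz => ?_, hm⟩
  have hram := hm.mem_ramPoints_iff.2 (Multiset.mem_map_of_mem _ hz)
  obtain ⟨x, -, rfl⟩ := Multiset.mem_map.1 hz
  exact ⟨hram, hcrit x hram⟩

theorem IsRamificationPortrait.linearForm_pow_dvd_fiberForm [CharZero K]
    [DecidableEq (ℙ K (Fin 2 → K))] (hm : IsRamificationPortrait P Q m) (h : IsMorphism P Q n)
    (hn : n ≠ 0) {z : ℙ K (Fin 2 → K) × ℙ K (Fin 2 → K)} (hz : z ∈ m) :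
    linearForm z.1.rep ^ ((m.map Prod.fst).count z.1 + 1) ∣ fiberForm P Q z.2.rep :=
  linearForm_pow_succ_dvd_fiberForm h.left h.right hn h.noCommonRoot z.1.rep_nonzero
    (hm.value z hz) ((linearForm_pow_count_dvd_formOfRoots _ _).trans hm.divisor.dvd)

theorem IsRamificationPortrait.exists_units_smul [IsAlgClosed K] [CharZero K]
    [DecidableEq (ℙ K (Fin 2 → K))]
    (hm : IsRamificationPortrait P Q m) (hm' : IsRamificationPortrait P' Q' m)
    (h : IsMorphism P Q n) (h' : IsMorphism P' Q' n) (hn : n ≠ 0)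
    (hdeg : 2 * n < m.card + (m.map Prod.fst).toFinset.card) :
    ∃ c : Kˣ, P = (c : K) • P' ∧ Q = (c : K) • Q' := by
  refine exists_units_smul_of_cross_eq (isRelPrime_of_noCommonRoot h.noCommonRoot)
    (isRelPrime_of_noCommonRoot h'.noCommonRoot) (sub_eq_zero.1 ?_)
  refine eq_zero_of_linearForm_pow_count_succ_dvd (s := m.map Prod.fst) (fun x hx => ?_) ?_
  · obtain ⟨z, hz, rfl⟩ := Multiset.mem_map.1 hx
    exact dvd_cross_of_dvd_fiberForm z.2.rep_nonzero (hm.linearForm_pow_dvd_fiberForm h hn hz)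
      (hm'.linearForm_pow_dvd_fiberForm h' hn hz)
  · have hcross := ((h.left.mul h'.right).sub (h'.left.mul h.right)).totalDegree_le
    rw [Multiset.card_map]
    omega

end Morphisms

end CGR

theorem finitely_many_maps_with_constrained_ramification
    (L : Type*) [Field L] [IsAlgClosed L] [CharZero L]
    (Y : Set (Projectivization L (Fin 2 → L))) (hY : Y.Finite)
    (n : ℕ) (hn : 1 < n) :
    ∃ T : Set (MvPolynomial (Fin 2) L × MvPolynomial (Fin 2) L), T.Finite ∧
      ∀ P Q : MvPolynomial (Fin 2) L,
        P.IsHomogeneous n → Q.IsHomogeneous n → NoCommonRoot P Q →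
        -- (1) every ramification point of φ lies in Y
        ramPoints P Q ⊆ Y →
        -- (2) every critical value of φ lies in Y
        critValues P Q ⊆ Y →
        -- (3) φ has at least 3 distinct ramification points
        (∃ x y z, x ≠ y ∧ x ≠ z ∧ y ≠ z ∧
          x ∈ ramPoints P Q ∧ y ∈ ramPoints P Q ∧ z ∈ ramPoints P Q) →
        ∃ pq ∈ T, ∃ c : Lˣ, P = (c : L) • pq.1 ∧ Q = (c : L) • pq.2 := by
  classical
  obtain ⟨T, hTsub, hT, hrep⟩ := exists_finite_representatives
    (s := {pq : MvPolynomial (Fin 2) L × MvPolynomial (Fin 2) L |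
      IsMorphism pq.1 pq.2 n ∧ ramPoints pq.1 pq.2 ⊆ Y ∧ critValues pq.1 pq.2 ⊆ Y})
    (r := fun pq m => IsRamificationPortrait pq.1 pq.2 m)
    (finite_setOf_multiset_card_eq (hY.prod hY) (2 * n - 2)) (by
      rintro pq ⟨h, hram, hcrit⟩
      obtain ⟨m, hcard, hmem, hm⟩ := h.exists_isRamificationPortrait (hY.subset hram)
      exact ⟨m, ⟨hcard, fun z hz => Set.prod_mono hram hcrit (hmem z hz)⟩, hm⟩)
  refine ⟨T, hT, fun P Q hP hQ hPQ hram hcrit h3 => ?_⟩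
  have h : IsMorphism P Q n := ⟨hP, hQ, hPQ⟩
  obtain ⟨pq, hpq, m, ⟨hcard, -⟩, hm, hm'⟩ := hrep (P, Q) ⟨h, hram, hcrit⟩
  have hthree : 2 < (m.map Prod.fst).toFinset.card := by
    obtain ⟨x, y, z, hxy, hxz, hyz, hx, hy, hz⟩ := h3
    rw [hm.mem_ramPoints_iff, ← Multiset.mem_toFinset] at hx hy hz
    exact Finset.two_lt_card.2 ⟨x, hx, y, hy, z, hz, hxy, hxz, hyz⟩
  exact ⟨pq, hpq, hm.exists_units_smul hm' h (hTsub hpq).1 (by omega) (by omega)⟩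

end
end
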